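/- Let q = p^m where p ≡ 3 (mod 8) is prime and m ≡ 2 (mod 4). Let x, a, b be integers with x² = q, q = a² + 2b² with a ≡ 1 (mod 4), and suppose x + a = −2. Then: (i) D_1 = {C_3^8 ∪ C_5^8, C_2^8 ∪ C_6^8} is a (q,2,(q−1)/4;(q−7−2x)/8,(q−3+2x)/8)-DPDF relative to C_0^2; (ii) D_2 = {C_0^8 ∪ C_2^8, C_3^8 ∪ C_7^8} is a (q,2,(q−1)/4;(q−3+2x)/8,(q−7−2x)/8)-DPDF relative to C_0^2. -/

import Mathlib

open Finset

section Defs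

variable {G : Type*} [AddCommGroup G] [Fintype G] [DecidableEq G]

/-- The multiset `Δ(D)` of internal differences `x - y` (for `x ≠ y` in `D`). -/
def intDiff (D : Finset G) : Multiset G :=
  ((D ×ˢ D).filter (fun p => p.1 ≠ p.2)).val.map (fun p => p.1 - p.2)

/-- The multiset `Δ(D, E)` of external differences `x - y` for `x ∈ D`, `y ∈ E`. -/
def extDiff (D E : Finset G) : Multiset G :=
  (D ×ˢ E).val.map (fun p => p.1 - p.2)

/-- The finset `G^*` of nonzero elements of `G`. -/
def Gstar (G : Type*) [AddCommGroup G] [Fintype G] [DecidableEq G] : Finset G :=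
  Finset.univ.erase 0

/-- `A` is a `(v, k, lam, mu)` partial difference set in `G`:
`Δ(A) = lam • A^* + mu • (G^* \ A)`. -/
def IsPDS (A : Finset G) (v k lam mu : ℕ) : Prop :=
  Fintype.card G = v ∧ A.card = k ∧
    intDiff A = lam • (A.erase 0).val + mu • (Gstar G \ A).val

/-- `D` is a `(v, k, lam, mu)` skew partial difference set corresponding to the
`(v, k, lam, mu)`-PDS `A`: `Δ(D) = lam • A^* + mu • (G^* \ A)`. -/
def IsSkewPDS (D A : Finset G) (v k lam mu : ℕ) : Prop :=
  IsPDS A v k lam mu ∧ D.card = k ∧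
    intDiff D = lam • (A.erase 0).val + mu • (Gstar G \ A).val

/-- `D` is an `(n, m, k₁, …, k_m; lam, mu)` disjoint partial difference family relative
to `T`: the `D i` are pairwise disjoint subsets of `G^*` of sizes `k i`, and
`∑ i, Δ(D i) = lam • T + mu • (G^* \ T)`. -/
def IsDPDF {ι : Type*} [Fintype ι] (D : ι → Finset G) (n m : ℕ) (k : ι → ℕ)
    (T : Finset G) (lam mu : ℕ) : Prop :=
  Fintype.card G = n ∧ Fintype.card ι = m ∧
    (∀ i, (0 : G) ∉ D i) ∧ (∀ i, (D i).card = k i) ∧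
    (Pairwise (fun i j => Disjoint (D i) (D j))) ∧
    ∑ i, intDiff (D i) = lam • T.val + mu • (Gstar G \ T).val

/-- `D` is an `(n, m, k₁, …, k_m; lam, mu)` external partial difference family relative
to `T`: the `D i` are pairwise disjoint subsets of `G^*` of sizes `k i`, and
`∑_{i ≠ j}, Δ(D i, D j) = lam • T + mu • (G^* \ T)`. -/
def IsEPDF {ι : Type*} [Fintype ι] [DecidableEq ι] (D : ι → Finset G) (n m : ℕ)
    (k : ι → ℕ) (T : Finset G) (lam mu : ℕ) : Prop :=
  Fintype.card G = n ∧ Fintype.card ι = m ∧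
    (∀ i, (0 : G) ∉ D i) ∧ (∀ i, (D i).card = k i) ∧
    (Pairwise (fun i j => Disjoint (D i) (D j))) ∧
    ∑ i, ∑ j ∈ Finset.univ.erase i, extDiff (D i) (D j)
      = lam • T.val + mu • (Gstar G \ T).val

/-- `D` is an `(n, m, k₁, …, k_m, lam)` disjoint difference family:
`∑ i, Δ(D i) = lam • G^*`. -/
def IsDDF {ι : Type*} [Fintype ι] (D : ι → Finset G) (n m : ℕ) (k : ι → ℕ)
    (lam : ℕ) : Prop :=
  Fintype.card G = n ∧ Fintype.card ι = m ∧
    (∀ i, (0 : G) ∉ D i) ∧ (∀ i, (D i).card = k i) ∧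
    (Pairwise (fun i j => Disjoint (D i) (D j))) ∧
    ∑ i, intDiff (D i) = lam • (Gstar G).val

/-- `D` is an `(n, m, k₁, …, k_m, lam)` external difference family:
`∑_{i ≠ j}, Δ(D i, D j) = lam • G^*`. -/
def IsEDF {ι : Type*} [Fintype ι] [DecidableEq ι] (D : ι → Finset G) (n m : ℕ)
    (k : ι → ℕ) (lam : ℕ) : Prop :=
  Fintype.card G = n ∧ Fintype.card ι = m ∧
    (∀ i, (0 : G) ∉ D i) ∧ (∀ i, (D i).card = k i) ∧
    (Pairwise (fun i j => Disjoint (D i) (D j))) ∧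
    ∑ i, ∑ j ∈ Finset.univ.erase i, extDiff (D i) (D j) = lam • (Gstar G).val

end Defs

section Cyclotomy

variable {F : Type*} [Field F] [Fintype F] [DecidableEq F]

/-- The cyclotomic class `C_i^e = α^i ⟨α^e⟩` of order `e` in the finite field `F`,
with respect to the primitive element `α`.  (Since `α` has multiplicative order at most
`|F| - 1`, letting `j` range over `0, …, |F| - 1` captures the whole class.) -/
def cycClass (α : F) (e i : ℕ) : Finset F :=
  (Finset.range (Fintype.card F)).image (fun j => α ^ (e * j + i))

/-- `α` is a primitive element of the finite field `F`: every nonzero element of `F`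
is a power of `α`. -/
def IsPrimitiveElt (α : F) : Prop :=
  ∀ x : F, x ≠ 0 → ∃ n : ℕ, α ^ n = x

end Cyclotomy

/-!
Finite Fourier inversion turns the difference identity for unions of cyclotomic classes of order 8
into quadratic identities between the Gaussian periods `η i`, one for each additive shift.
Since `p ≡ 3 (mod 8)`, Frobenius gives `η (3 * i) = η i`, so only `η 0`, `η 1`, `η 2`, `η 4`, `η 5`
remain. Put `X = p ^ (m / 2)`, which is `3` modulo `8`, so that `x = -X` and `a = X - 2`. The
Gauss sums of the quadratic and quartic characters are `X` and `-X`, the signs being forced by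
the integrality of the periods. The octic Jacobi sum is `A + B √-2` with `A² + 2B² = q`, where
`A` is fixed up to sign by `p ∤ A` (a binomial coefficient prime to `p`) and its sign by a
congruence modulo `4`, whence `A = -a = 2 - X`. This determines the periods up to two signs on
which the required identities do not depend.
-/

section CyclotomicClasses

theorem pow_eq_neg_one_of_isPrimitiveRoot {R : Type*} [CommRing R] [NoZeroDivisors R]
    {ζ : R} {k m : ℕ} (hζ : IsPrimitiveRoot ζ k) (hk : k ≠ 0) (hm : k = 2 * m) : ζ ^ m = -1 :=
  (hζ.pow (Nat.pos_of_ne_zero hk) (by rw [hm, mul_comm])).eq_neg_one_of_two_right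

variable {F : Type*} [Field F] [Fintype F]

theorem IsPrimitiveElt.isPrimitiveRoot {α : F} (hα : IsPrimitiveElt α)
    (hF : 2 < Fintype.card F) : IsPrimitiveRoot α (Fintype.card F - 1) := by
  classical
  have h0 : α ≠ 0 := by
    rintro rfl
    have : Nontrivial Fˣ :=
      Fintype.one_lt_card_iff_nontrivial.mp (by rw [Fintype.card_units]; omega)
    obtain ⟨u, hu⟩ := exists_ne (1 : Fˣ)
    obtain ⟨n, hn⟩ := hα u u.ne_zero
    rcases eq_or_ne n 0 with rfl | hn0
    · exact hu (Units.ext (by simpa using hn.symm))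
    · exact u.ne_zero (by rw [← hn, zero_pow hn0])
  have hgen (u : Fˣ) : u ∈ Subgroup.zpowers (Units.mk0 α h0) := by
    obtain ⟨n, hn⟩ := hα u u.ne_zero
    exact ⟨n, Units.ext (by simpa using hn)⟩
  have horder := orderOf_eq_card_of_forall_mem_zpowers hgen
  rw [Nat.card_eq_fintype_card, Fintype.card_units] at horder
  rw [← horder, ← orderOf_units, Units.val_mk0]
  exact IsPrimitiveRoot.orderOf α

variable {α : F} (hα : IsPrimitiveRoot α (Fintype.card F - 1))
include hα

theorem exists_pow_eq_of_ne_zero {y : F} (hy : y ≠ 0) : ∃ n, α ^ n = y :=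
  have : NeZero (Fintype.card F - 1) := ⟨Nat.sub_ne_zero_of_lt Fintype.one_lt_card⟩
  (hα.eq_pow_of_pow_eq_one (FiniteField.pow_card_sub_one_eq_one y hy)).imp fun _ => And.right

theorem primitiveRoot_ne_zero : α ≠ 0 :=
  hα.ne_zero (Nat.sub_ne_zero_of_lt Fintype.one_lt_card)

theorem mulChar_ne_one_of_apply_ne_one {R : Type*} [CommMonoidWithZero R] {χ : MulChar F R}
    (hχ : χ α ≠ 1) : χ ≠ 1 :=
  MulChar.ne_one_iff.mpr ⟨Units.mk0 α (primitiveRoot_ne_zero hα), hχ⟩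

variable [DecidableEq F] {e : ℕ}

theorem zero_notMem_cycClass (i : ℕ) : (0 : F) ∉ cycClass α e i := by
  simp [cycClass, primitiveRoot_ne_zero hα]

variable (he : e ∣ Fintype.card F - 1)
include he

theorem pow_mem_cycClass {n i : ℕ} : α ^ n ∈ cycClass α e i ↔ (n : ZMod e) = i := by
  have hpos : 0 < Fintype.card F - 1 := Nat.sub_pos_of_lt Fintype.one_lt_card
  have pow_eq_iff (k l : ℕ) : α ^ k = α ^ l ↔ k ≡ l [MOD Fintype.card F - 1] := by
    rw [(hα.isOfFinOrder hpos.ne').pow_eq_pow_iff_modEq, ← hα.eq_orderOf]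
  simp only [cycClass, mem_image, mem_range, pow_eq_iff, ZMod.natCast_eq_natCast_iff]
  constructor
  · rintro ⟨j, -, hj⟩
    exact (hj.of_dvd he).symm.trans (by simp [Nat.ModEq])
  · intro h
    have hle : i ≤ n + (Fintype.card F - 1) * i := le_add_left (Nat.le_mul_of_pos_left i hpos)
    have hmod : i ≡ n + (Fintype.card F - 1) * i [MOD e] :=
      h.symm.trans (by simpa using (Nat.modEq_zero_iff_dvd.mpr (he.mul_right i)).symm.add_left n)
    obtain ⟨j, hj⟩ := (Nat.modEq_iff_dvd' hle).mp hmod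
    refine ⟨j % (Fintype.card F - 1), (Nat.mod_lt _ hpos).trans_le (Nat.sub_le _ _), ?_⟩
    calc e * (j % (Fintype.card F - 1)) + i
        ≡ e * j + i [MOD Fintype.card F - 1] := ((Nat.mod_modEq j _).mul_left e).add_right i
      _ = n + (Fintype.card F - 1) * i := by omega
      _ ≡ n [MOD Fintype.card F - 1] := by simp [Nat.ModEq]

variable [NeZero e]

theorem pow_mem_cycClass_val {n : ℕ} {i : ZMod e} :
    α ^ n ∈ cycClass α e i.val ↔ (n : ZMod e) = i := by
  rw [pow_mem_cycClass hα he, ZMod.natCast_zmod_val]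

theorem pow_mul_mem_cycClass {n : ℕ} {i : ZMod e} {y : F} :
    α ^ n * y ∈ cycClass α e (i + n).val ↔ y ∈ cycClass α e i.val := by
  rcases eq_or_ne y 0 with rfl | hy
  · simp [zero_notMem_cycClass hα]
  obtain ⟨k, rfl⟩ := exists_pow_eq_of_ne_zero hα hy
  rw [← pow_add, pow_mem_cycClass_val hα he, pow_mem_cycClass_val hα he]
  push_cast
  rw [add_comm i, add_left_cancel_iff]

theorem sum_mulChar_comp_mul {R : Type*} [CommSemiring R] (χ : MulChar F R) (hχ : χ α ^ e = 1)
    (h : F → F) (g : F → R) :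
    ∑ y, χ (h y) * g y = ∑ i : ZMod e, χ α ^ i.val * ∑ y with h y ∈ cycClass α e i.val, g y := by
  simp only [mul_sum, sum_filter]
  rw [sum_comm]
  refine sum_congr rfl fun y _ => ?_
  rcases eq_or_ne (h y) 0 with hy | hy
  · simp [hy, zero_notMem_cycClass hα, MulChar.map_zero]
  · obtain ⟨n, hn⟩ := exists_pow_eq_of_ne_zero hα hy
    simp [← hn, pow_mem_cycClass_val hα he, ZMod.val_natCast, ← pow_eq_pow_mod n hχ]

theorem card_cycClass (i : ZMod e) : #(cycClass α e i.val) = (Fintype.card F - 1) / e := by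
  have hα0 := primitiveRoot_ne_zero hα
  have card_eq (j : ZMod e) : #(cycClass α e j.val) = #(cycClass α e i.val) :=
    card_equiv (Equiv.mulLeft₀ (α ^ (i - j).val) (pow_ne_zero _ hα0)) fun y => by
      simpa using (pow_mul_mem_cycClass hα he (n := (i - j).val) (i := j) (y := y)).symm
  have hsum := sum_mulChar_comp_mul hα he (1 : MulChar F ℤ) (by simp [MulChar.one_apply, hα0])
    id 1
  simp only [id_eq, Pi.one_apply, mul_one, MulChar.sum_one_eq_card_units, Fintype.card_units,
    MulChar.one_apply hα0.isUnit, one_pow, one_mul, sum_const, filter_univ_mem, card_eq, card_univ,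
    ZMod.card, nsmul_eq_mul] at hsum
  rw [show Fintype.card F - 1 = e * #(cycClass α e i.val) by exact_mod_cast hsum,
    Nat.mul_div_cancel_left _ (NeZero.pos e)]

end CyclotomicClasses

section Fourier

variable {K : Type*} [CommRing K]

theorem sum_map_intDiff {G : Type*} [AddCommGroup G] [DecidableEq G] (ψ : AddChar G K)
    (D : Finset G) :
    ((intDiff D).map ψ).sum = (∑ y ∈ D, ψ y) * (∑ y ∈ D, ψ (-y)) - #D := by
  have hdiag : ∑ p ∈ D ×ˢ D with ¬p.1 ≠ p.2, ψ (p.1 - p.2) = #D := by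
    simp only [not_not, ← diag_eq_filter, sum_diag, sub_self, AddChar.map_zero_eq_one, sum_const,
      nsmul_eq_mul, mul_one]
  rw [eq_sub_iff_add_eq, ← hdiag, intDiff, Multiset.map_map]
  calc ∑ p ∈ D ×ˢ D with p.1 ≠ p.2, ψ (p.1 - p.2) + ∑ p ∈ D ×ˢ D with ¬p.1 ≠ p.2, ψ (p.1 - p.2)
      = ∑ p ∈ D ×ˢ D, ψ (p.1 - p.2) := sum_filter_add_sum_filter_not ..
    _ = (∑ y ∈ D, ψ y) * ∑ y ∈ D, ψ (-y) := by
      simp only [sum_mul_sum, sum_product, sub_eq_add_neg, AddChar.map_add_eq_mul]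

variable [IsDomain K]

theorem sum_Gstar_sdiff {G : Type*} [AddCommGroup G] [Fintype G] [DecidableEq G]
    {ψ : AddChar G K} (hψ : ψ ≠ 1) {T : Finset G} (hT : 0 ∉ T) :
    ∑ y ∈ Gstar G \ T, ψ y = -1 - ∑ y ∈ T, ψ y := by
  have hsub : T ⊆ Gstar G := subset_erase.mpr ⟨subset_univ T, hT⟩
  have hsum := AddChar.sum_eq_zero_of_ne_one hψ
  rw [← add_sum_erase _ _ (mem_univ 0), AddChar.map_zero_eq_one] at hsum
  rw [eq_sub_iff_add_eq, sum_sdiff hsub, Gstar]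
  linear_combination hsum

variable {R : Type*} [CommRing R] [DecidableEq R]

theorem sum_mul_sum_map_mulShift [Fintype R] {ψ : AddChar R K} (hψ : ψ.IsPrimitive)
    (M : Multiset R) (g : R) :
    ∑ t, ψ (-(t * g)) * (M.map (ψ.mulShift t)).sum = Fintype.card R * M.count g := by
  have orthogonality (y : R) :
      ∑ t, ψ (-(t * g)) * ψ.mulShift t y = if y = g then (Fintype.card R : K) else 0 := by
    have h := AddChar.sum_mulShift (y - g) hψ
    simp only [sub_eq_zero] at h
    push_cast at h
    rw [← h]
    refine sum_congr rfl fun t _ => ?_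
    rw [AddChar.mulShift_apply, ← AddChar.map_add_eq_mul]
    ring_nf
  induction M using Multiset.induction_on with
  | empty => simp
  | cons y M ih =>
    simp only [Multiset.map_cons, Multiset.sum_cons, mul_add, sum_add_distrib, ih, orthogonality,
      Multiset.count_cons, eq_comm (a := y)]
    split_ifs <;> push_cast <;> ring

theorem eq_of_sum_map_mulShift_eq [Finite R] [CharZero K] {ψ : AddChar R K} (hψ : ψ.IsPrimitive)
    {M N : Multiset R} (h0 : M.count 0 = N.count 0)
    (h : ∀ t ≠ 0, (M.map (ψ.mulShift t)).sum = (N.map (ψ.mulShift t)).sum) : M = N := by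
  have := Fintype.ofFinite R
  have inversion (M : Multiset R) (g : R) :
      ∑ t, (ψ (-(t * g)) - 1) * (M.map (ψ.mulShift t)).sum =
        Fintype.card R * (M.count g - M.count 0) := by
    have h1 := sum_mul_sum_map_mulShift hψ M g
    have h2 := sum_mul_sum_map_mulShift hψ M 0
    simp only [mul_zero, neg_zero, AddChar.map_zero_eq_one, one_mul] at h2
    simp only [sub_mul, one_mul, sum_sub_distrib, h1, h2, mul_sub]
  ext g
  have hg : ∑ t, (ψ (-(t * g)) - 1) * (M.map (ψ.mulShift t)).sum =
      ∑ t, (ψ (-(t * g)) - 1) * (N.map (ψ.mulShift t)).sum := by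
    refine sum_congr rfl fun t _ => ?_
    rcases eq_or_ne t 0 with rfl | ht
    · simp
    · rw [h t ht]
  rw [inversion, inversion, h0] at hg
  exact_mod_cast sub_left_inj.mp
    (mul_left_cancel₀ (Nat.cast_ne_zero.mpr (Fintype.card_ne_zero (α := R))) hg)

end Fourier

section Periods

variable {F : Type*} [Field F] [Fintype F] [DecidableEq F]

/-- The union of the cyclotomic classes `C_i^e` with `i ∈ S`. -/
def cycUnion (α : F) {e : ℕ} (S : Finset (ZMod e)) : Finset F :=
  S.biUnion fun i => cycClass α e i.val

/-- The Gaussian period of the class `C_i^e`, the sum of the values of `ψ` on it. -/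
def gaussPeriod {K : Type*} [CommRing K] (α : F) {e : ℕ} (ψ : AddChar F K) (i : ZMod e) : K :=
  ∑ y ∈ cycClass α e i.val, ψ y

theorem cycUnion_pair (α : F) {e : ℕ} (i j : ZMod e) :
    cycUnion α {i, j} = cycClass α e i.val ∪ cycClass α e j.val := by
  simp [cycUnion]

variable {α : F} (hα : IsPrimitiveRoot α (Fintype.card F - 1)) {e : ℕ}
include hα

theorem zero_notMem_cycUnion (S : Finset (ZMod e)) : (0 : F) ∉ cycUnion α S := by
  simp [cycUnion, zero_notMem_cycClass hα]

variable [NeZero e] (he : e ∣ Fintype.card F - 1)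
include he

theorem pow_mem_cycUnion {S : Finset (ZMod e)} {n : ℕ} :
    α ^ n ∈ cycUnion α S ↔ (n : ZMod e) ∈ S := by
  simp [cycUnion, pow_mem_cycClass_val hα he]

theorem disjoint_cycUnion {S T : Finset (ZMod e)} (h : Disjoint S T) :
    Disjoint (cycUnion α S) (cycUnion α T) := by
  refine disjoint_left.mpr fun y hS hT => ?_
  obtain ⟨n, rfl⟩ :=
    exists_pow_eq_of_ne_zero hα (ne_of_mem_of_not_mem hS (zero_notMem_cycUnion hα S))
  rw [pow_mem_cycUnion hα he] at hS hT
  exact disjoint_left.mp h hS hT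

theorem pairwiseDisjoint_cycClass (S : Finset (ZMod e)) :
    (S : Set (ZMod e)).PairwiseDisjoint fun i => cycClass α e i.val := fun i _ j _ hij => by
  simpa [cycUnion] using disjoint_cycUnion hα he (disjoint_singleton.mpr hij)

theorem card_cycUnion (S : Finset (ZMod e)) :
    #(cycUnion α S) = #S * ((Fintype.card F - 1) / e) := by
  rw [cycUnion, card_biUnion (pairwiseDisjoint_cycClass hα he S),
    sum_const_nat fun i _ => card_cycClass hα he i]

variable {K : Type*} [CommRing K]

theorem sum_cycClass_mul_pow (g : F → K) (n : ℕ) (i : ZMod e) :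
    ∑ y ∈ cycClass α e i.val, g (α ^ n * y) = ∑ y ∈ cycClass α e (i + n).val, g y :=
  sum_equiv (Equiv.mulLeft₀ (α ^ n) (pow_ne_zero n (primitiveRoot_ne_zero hα)))
    (fun _ => (pow_mul_mem_cycClass hα he).symm) fun _ _ => rfl

theorem sum_cycUnion_mulShift_pow (ψ : AddChar F K) (n : ℕ) (S : Finset (ZMod e)) :
    ∑ y ∈ cycUnion α S, ψ.mulShift (α ^ n) y = ∑ i ∈ S, gaussPeriod α ψ (i + (n : ZMod e)) := by
  rw [cycUnion, sum_biUnion (pairwiseDisjoint_cycClass hα he S)]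
  exact sum_congr rfl fun i _ => sum_cycClass_mul_pow hα he ψ n i

theorem isDPDF_cycUnion [IsDomain K] [CharZero K] {ψ : AddChar F K} (hψ : ψ.IsPrimitive)
    {h : ZMod e} (hneg : -1 ∈ cycClass α e h.val) {ι : Type*} [Fintype ι]
    {S : ι → Finset (ZMod e)} (hS : Pairwise fun i j => Disjoint (S i) (S j))
    {k : ℕ} (hk : ∀ i, #(S i) * ((Fintype.card F - 1) / e) = k)
    (T : Finset (ZMod e)) {lam mu : ℕ}
    (hperiods : ∀ j : ZMod e,
      ∑ i, ((∑ l ∈ S i, gaussPeriod α ψ (l + j)) * (∑ l ∈ S i, gaussPeriod α ψ (l + (j + h))) - k) =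
        lam * ∑ l ∈ T, gaussPeriod α ψ (l + j) + mu * (-1 - ∑ l ∈ T, gaussPeriod α ψ (l + j))) :
    IsDPDF (fun i => cycUnion α (S i)) (Fintype.card F) (Fintype.card ι) (fun _ => k)
      (cycUnion α T) lam mu := by
  have hcard (i) : #(cycUnion α (S i)) = k := (card_cycUnion hα he (S i)).trans (hk i)
  refine ⟨rfl, rfl, fun i => zero_notMem_cycUnion hα _, hcard,
    fun i j hij => disjoint_cycUnion hα he (hS hij), ?_⟩
  have hT := zero_notMem_cycUnion hα T
  refine eq_of_sum_map_mulShift_eq hψ ?_ fun t ht => ?_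
  · simp [intDiff, Gstar, hT, sub_eq_zero]
  obtain ⟨n, rfl⟩ := exists_pow_eq_of_ne_zero hα ht
  obtain ⟨m, hm⟩ := exists_pow_eq_of_ne_zero hα (neg_ne_zero.mpr (one_ne_zero (α := F)))
  have hmh : (m : ZMod e) = h := by rwa [← hm, pow_mem_cycClass_val hα he] at hneg
  have sum_neg (i) : ∑ y ∈ cycUnion α (S i), ψ.mulShift (α ^ n) (-y) =
      ∑ l ∈ S i, gaussPeriod α ψ (l + ((n : ZMod e) + h)) := by
    have := sum_cycUnion_mulShift_pow hα he ψ (n + m) (S i)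
    simpa [pow_add, hm, hmh] using this
  have hnT := sum_Gstar_sdiff (hψ ht) hT
  rw [sum_cycUnion_mulShift_pow hα he] at hnT
  let charSum : Multiset F →+ K :=
    Multiset.sumAddMonoidHom.comp (Multiset.mapAddMonoidHom (ψ.mulShift (α ^ n)))
  change charSum _ = charSum _
  simp only [map_sum, map_add, map_nsmul]
  calc ∑ i, charSum (intDiff (cycUnion α (S i)))
      = ∑ i, ((∑ l ∈ S i, gaussPeriod α ψ (l + (n : ZMod e))) *
          (∑ l ∈ S i, gaussPeriod α ψ (l + ((n : ZMod e) + h))) - k) :=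
        sum_congr rfl fun i _ => by
          rw [← sum_neg, ← sum_cycUnion_mulShift_pow hα he, ← hcard i]
          exact sum_map_intDiff _ _
    _ = lam • charSum (cycUnion α T).val + mu • charSum (Gstar F \ cycUnion α T).val := by
        rw [hperiods, ← hnT, ← sum_cycUnion_mulShift_pow hα he, nsmul_eq_mul, nsmul_eq_mul]
        rfl

end Periods

section GaussJacobi

variable {F : Type*} [Field F] [Fintype F] [DecidableEq F]

/-- The number of `y` with `y * (1 - y)` in the cyclotomic class `C_i^e`. -/
def mulOneSubCount (α : F) {e : ℕ} (i : ZMod e) : ℕ := #{y | y * (1 - y) ∈ cycClass α e i.val}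

variable {α : F} (hα : IsPrimitiveRoot α (Fintype.card F - 1)) {e : ℕ}
include hα

omit [DecidableEq F] in
theorem exists_mulChar_apply_eq {K : Type*} [CommRing K] {ζ : K}
    (hζ : ζ ^ (Fintype.card F - 1) = 1) : ∃ χ : MulChar F K, χ α = ζ := by
  classical
  have hα0 := primitiveRoot_ne_zero hα
  have hgen (u : Fˣ) : u ∈ Subgroup.zpowers (Units.mk0 α hα0) := by
    obtain ⟨n, hn⟩ := exists_pow_eq_of_ne_zero hα u.ne_zero
    exact ⟨n, Units.ext (by simpa using hn)⟩
  have hcard : Fintype.card F - 1 ≠ 0 := Nat.sub_ne_zero_of_lt Fintype.one_lt_card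
  let ζ' : Kˣ := Units.ofPowEqOne ζ _ hζ hcard
  have hmem : ζ' ∈ rootsOfUnity (Fintype.card Fˣ) K := by
    rw [mem_rootsOfUnity, Fintype.card_units]
    exact Units.ext (by simp [ζ'])
  exact ⟨MulChar.ofRootOfUnity hmem hgen, MulChar.ofRootOfUnity_spec hmem hgen⟩

variable [NeZero e] (he : e ∣ Fintype.card F - 1) {K : Type*} [CommRing K]
include he

theorem gaussSum_eq_sum_gaussPeriod {χ : MulChar F K} (hχ : χ α ^ e = 1) (ψ : AddChar F K) :
    gaussSum χ ψ = ∑ i : ZMod e, χ α ^ i.val * gaussPeriod α ψ i := by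
  simpa [gaussSum, gaussPeriod] using sum_mulChar_comp_mul hα he χ hχ id ψ

theorem jacobiSum_self_eq_sum_mulOneSubCount {χ : MulChar F K} (hχ : χ α ^ e = 1) :
    jacobiSum χ χ = ∑ i : ZMod e, χ α ^ i.val * mulOneSubCount α i := by
  simpa [jacobiSum, mulOneSubCount] using
    sum_mulChar_comp_mul hα he χ hχ (fun y => y * (1 - y)) 1

theorem sum_gaussPeriod [IsDomain K] {ψ : AddChar F K} (hψ : ψ ≠ 1) :
    ∑ i : ZMod e, gaussPeriod α ψ i = -1 := by
  have h1 : (1 : MulChar F K) α = 1 := MulChar.one_apply (primitiveRoot_ne_zero hα).isUnit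
  have h := gaussSum_eq_sum_gaussPeriod hα he (χ := 1) (by simp [h1]) ψ
  simpa [h1, gaussSum_one_left hψ] using h.symm

theorem sum_mulOneSubCount :
    ∑ i : ZMod e, (mulOneSubCount α i : ℤ) = Fintype.card F - 2 := by
  have h1 : (1 : MulChar F ℤ) α = 1 := MulChar.one_apply (primitiveRoot_ne_zero hα).isUnit
  have h := jacobiSum_self_eq_sum_mulOneSubCount hα he (χ := (1 : MulChar F ℤ)) (by simp [h1])
  simpa [h1, jacobiSum_one_one] using h.symm

theorem pow_mem_cycClass_mul_val {p : ℕ} (hp0 : p ≠ 0) (hp : IsUnit (p : ZMod e)) {y : F}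
    {i : ZMod e} : y ^ p ∈ cycClass α e (p * i : ZMod e).val ↔ y ∈ cycClass α e i.val := by
  rcases eq_or_ne y 0 with rfl | hy
  · simp [zero_notMem_cycClass hα, hp0]
  obtain ⟨n, rfl⟩ := exists_pow_eq_of_ne_zero hα hy
  rw [← pow_mul, pow_mem_cycClass_val hα he, pow_mem_cycClass_val hα he, mul_comm n, Nat.cast_mul,
    hp.mul_right_inj]

variable {p : ℕ} [Fact p.Prime] [CharP F p]

theorem gaussPeriod_char_mul {ψ : AddChar F K} (hψ : ∀ y, ψ (y ^ p) = ψ y)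
    (hp : IsUnit (p : ZMod e)) (i : ZMod e) :
    gaussPeriod α ψ ((p : ZMod e) * i) = gaussPeriod α ψ i := by
  refine (sum_equiv (frobeniusEquiv F p).toEquiv (fun y => ?_) fun y _ => ?_).symm
  · exact (pow_mem_cycClass_mul_val hα he (Fact.out : p.Prime).ne_zero hp).symm
  · exact (hψ y).symm

theorem mulOneSubCount_char_mul (hp : IsUnit (p : ZMod e)) (i : ZMod e) :
    mulOneSubCount α ((p : ZMod e) * i) = mulOneSubCount α i := by
  refine (card_equiv (frobeniusEquiv F p).toEquiv fun y => ?_).symm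
  have h := pow_mem_cycClass_mul_val hα he (Fact.out : p.Prime).ne_zero hp (y := y * (1 - y))
    (i := i)
  simpa [mul_pow, sub_pow_char, frobenius_def] using h.symm

end GaussJacobi

section FieldCharacters

theorem isIntegral_addChar_apply {G : Type*} [AddCommGroup G] [Finite G] {K : Type*} [CommRing K]
    (ψ : AddChar G K) (y : G) : IsIntegral ℤ (ψ y) := by
  refine IsIntegral.of_pow (n := Nat.card G) Nat.card_pos ?_
  rw [← AddChar.map_nsmul_eq_pow, card_nsmul_eq_zero', AddChar.map_zero_eq_one]
  exact isIntegral_one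

theorem exists_isPrimitive_addChar_pow_char_eq (F : Type*) [Field F] [Finite F] (p : ℕ)
    [Fact p.Prime] [CharP F p] :
    ∃ ψ : AddChar F ℂ, ψ.IsPrimitive ∧ ∀ y, ψ (y ^ p) = ψ y := by
  let _ : Algebra (ZMod p) F := ZMod.algebra F p
  refine ⟨(ZMod.stdAddChar (N := p)).compAddMonoidHom (Algebra.trace (ZMod p) F).toAddMonoidHom,
    AddChar.IsPrimitive.of_ne_one ?_, fun y => congrArg ZMod.stdAddChar ?_⟩
  · obtain ⟨a, ha⟩ := Algebra.trace_surjective (ZMod p) F 1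
    refine AddChar.ne_one_iff.mpr ⟨a, fun hone => one_ne_zero (α := ZMod p) ?_⟩
    rw [← ha]
    exact ZMod.injective_stdAddChar (hone.trans (AddChar.map_zero_eq_one _).symm)
  · simpa [ZMod.card] using
      Algebra.trace_eq_of_algEquiv (FiniteField.frobeniusAlgEquivOfAlgebraic (ZMod p) F) y

end FieldCharacters

theorem sq_eq_sq_of_sq_add_mul_sq_eq_prime_pow {p : ℤ} (hp : Prime p) (h2 : ¬p ∣ 2) {m : ℕ}
    (hm : m ≠ 0) {d : ℤ} (hd : 2 ≤ d) {a b c e : ℤ} (hab : a ^ 2 + d * b ^ 2 = p ^ m)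
    (hce : c ^ 2 + d * e ^ 2 = p ^ m) (ha : ¬p ∣ a) (hc : ¬p ∣ c) : a ^ 2 = c ^ 2 := by
  have hpm : p ∣ p ^ m := dvd_pow_self p hm
  have hpm0 : p ^ m ≠ 0 := pow_ne_zero m hp.ne_zero
  have he : ¬p ∣ e := fun he => hc <| hp.dvd_of_dvd_pow (n := 2) <| by
    rw [show c ^ 2 = p ^ m - d * e ^ 2 by linear_combination hce]
    exact dvd_sub hpm ((dvd_pow he two_ne_zero).mul_left d)
  have hmul : (a * e - b * c) * (a * e + b * c) = p ^ m * (e ^ 2 - b ^ 2) := by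
    linear_combination e ^ 2 * hab - b ^ 2 * hce
  have hdvd : p ^ m ∣ (a * e - b * c) * (a * e + b * c) := ⟨_, hmul⟩
  have eq_zero_of_dvd {s t : ℤ} (h : s ^ 2 + d * t ^ 2 = (p ^ m) ^ 2) (ht : p ^ m ∣ t) :
      t = 0 := by
    obtain ⟨k, rfl⟩ := ht
    have hk : k = 0 := by
      by_contra hk
      have hkpos : 0 < k ^ 2 := by positivity
      have hpos : 0 < (p ^ m) ^ 2 := by positivity
      nlinarith [sq_nonneg s, mul_le_mul hd (show 1 ≤ k ^ 2 by omega) zero_le_one (by omega)]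
    rw [hk, mul_zero]
  have hzero : (a * e - b * c) * (a * e + b * c) = 0 := by
    by_cases h : p ∣ a * e - b * c
    · have h' : ¬p ∣ a * e + b * c := fun h' => by
        have hsum : p ∣ 2 * (a * e) := by simpa [two_mul] using dvd_add h h'
        exact (hp.dvd_or_dvd hsum).elim h2 fun hae => (hp.dvd_or_dvd hae).elim ha he
      have hsq : (a * c + d * b * e) ^ 2 + d * (a * e - b * c) ^ 2 = (p ^ m) ^ 2 := by
        linear_combination (c ^ 2 + d * e ^ 2) * hab + p ^ m * hce
      rw [eq_zero_of_dvd hsq (hp.pow_dvd_of_dvd_mul_right m h' hdvd), zero_mul]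
    · have hsq : (a * c - d * b * e) ^ 2 + d * (a * e + b * c) ^ 2 = (p ^ m) ^ 2 := by
        linear_combination (c ^ 2 + d * e ^ 2) * hab + p ^ m * hce
      rw [eq_zero_of_dvd hsq (hp.pow_dvd_of_dvd_mul_left m h hdvd), mul_zero]
  have hbe : e ^ 2 - b ^ 2 = 0 := (mul_eq_zero.mp (hmul.symm.trans hzero)).resolve_left hpm0
  linear_combination hab - hce + d * hbe

theorem not_dvd_choose_mul_add {p : ℕ} (hp : p.Prime) {a b c d : ℕ} (hc : c < p) (hd : d ≤ c)
    (h : ¬p ∣ a.choose b) : ¬p ∣ (p * a + c).choose (p * b + d) := by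
  have : Fact p.Prime := ⟨hp⟩
  have mod_eq {x y : ℕ} (hy : y < p) : (p * x + y) % p = y := by
    rw [Nat.mul_add_mod, Nat.mod_eq_of_lt hy]
  have div_eq {x y : ℕ} (hy : y < p) : (p * x + y) / p = x := by
    rw [Nat.mul_add_div hp.pos, Nat.div_eq_of_lt hy, add_zero]
  have hlucas := Choose.choose_modEq_choose_mod_mul_choose_div_nat (p := p) (n := p * a + c)
    (k := p * b + d)
  rw [mod_eq hc, mod_eq (hd.trans_lt hc), div_eq hc, div_eq (hd.trans_lt hc)] at hlucas
  rw [hlucas.dvd_iff dvd_rfl, hp.dvd_mul]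
  refine not_or.mpr ⟨fun hcd => ?_, h⟩
  have hfact : p ∣ c.factorial :=
    Nat.choose_mul_factorial_mul_factorial hd ▸ (hcd.mul_right _).mul_right _
  exact hc.not_ge (hp.dvd_factorial.mp hfact)

theorem not_dvd_choose_seven_mul {p : ℕ} (hp : p.Prime) (hp8 : p % 8 = 3) :
    ∀ {t J : ℕ}, 8 * J + 1 = p ^ (2 * t) → ¬p ∣ (7 * J).choose J
  | 0, J, h => by
    obtain rfl : J = 0 := by simpa using h
    simpa using hp.ne_one
  | t + 1, J, h => by
    obtain ⟨k, hk⟩ : ∃ k, p = 8 * k + 3 := ⟨p / 8, by omega⟩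
    obtain ⟨I, hI⟩ : ∃ I, 8 * I + 1 = p ^ (2 * t) := by
      have : p ^ (2 * t) % 8 = 1 := by rw [pow_mul, Nat.pow_mod, Nat.pow_mod p, hp8]; simp
      exact ⟨p ^ (2 * t) / 8, by omega⟩
    have hJ : J = p * (p * I + k) + (3 * k + 1) := by
      have : 8 * J + 1 = 8 * (p * (p * I + k) + (3 * k + 1)) + 1 := by
        rw [h, mul_add, pow_add, ← hI]
        linear_combination (p + 3) * hk
      omega
    have h7J : 7 * J = p * (p * (7 * I) + (7 * k + 2)) + (5 * k + 1) := by
      linear_combination 7 * hJ + 2 * hk.symm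
    rw [h7J, hJ]
    exact not_dvd_choose_mul_add hp (by omega) (by omega)
      (not_dvd_choose_mul_add hp (by omega) (by omega) (not_dvd_choose_seven_mul hp hp8 hI))

theorem intCast_dvd_of_mul_eq_of_isIntegral {K : Type*} [Field K] [CharZero K] {z : K}
    (hz : IsIntegral ℤ z) {d n : ℤ} (hd : d ≠ 0) (h : d * z = n) : d ∣ n := by
  have hdK : (d : K) ≠ 0 := Int.cast_ne_zero.mpr hd
  have hdQ : (d : ℚ) ≠ 0 := Int.cast_ne_zero.mpr hd
  have hquot : algebraMap ℚ K (n / d) = z := by simp [← h, hdK]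
  rw [← hquot, isIntegral_algebraMap_iff (algebraMap ℚ K).injective,
    IsIntegrallyClosed.isIntegral_iff] at hz
  obtain ⟨k, hk⟩ := hz
  rw [eq_intCast, eq_div_iff hdQ, mul_comm] at hk
  exact ⟨k, mod_cast hk.symm⟩

section PowerSums

variable {F : Type*} [Field F] [Fintype F]

theorem sum_pow_eq_ite_of_lt {k : ℕ} (hk : k < 2 * (Fintype.card F - 1)) :
    ∑ y : F, y ^ k = if k = Fintype.card F - 1 then -1 else 0 := by
  classical
  rcases lt_trichotomy k (Fintype.card F - 1) with h | rfl | h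
  · rw [if_neg h.ne, FiniteField.sum_pow_lt_card_sub_one F k h]
  · have hpow (y : F) : y ^ (Fintype.card F - 1) = (1 : MulChar F F) y := by
      rcases eq_or_ne y 0 with rfl | hy
      · rw [zero_pow (by omega), MulChar.map_zero]
      · rw [FiniteField.pow_card_sub_one_eq_one y hy, MulChar.one_apply hy.isUnit]
    simp [hpow, MulChar.sum_one_eq_card_units, Fintype.card_units,
      Nat.cast_sub Fintype.card_pos]
  · obtain ⟨r, rfl⟩ := Nat.exists_eq_add_of_lt h
    have hpow (y : F) : y ^ (Fintype.card F - 1 + r + 1) = y ^ (r + 1) := by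
      rw [show Fintype.card F - 1 + r + 1 = Fintype.card F + r by omega, pow_add,
        FiniteField.pow_card, pow_succ']
    rw [if_neg h.ne', sum_congr rfl fun y _ => hpow y,
      FiniteField.sum_pow_lt_card_sub_one F _ (by omega)]

theorem sum_pow_mul_one_sub_pow {m n : ℕ} (hm : m ≤ Fintype.card F - 1)
    (hmn : m + n < 2 * (Fintype.card F - 1)) :
    ∑ y : F, y ^ m * (1 - y) ^ n =
      -((-1) ^ (Fintype.card F - 1 - m) * n.choose (Fintype.card F - 1 - m)) := by
  have expand (y : F) : y ^ m * (1 - y) ^ n =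
      ∑ j ∈ range (n + 1), (-1) ^ j * n.choose j * y ^ (m + j) := by
    rw [sub_eq_neg_add, add_pow, mul_sum]
    refine sum_congr rfl fun j _ => ?_
    rw [neg_pow]
    ring
  have power_sum {j : ℕ} (hj : j ∈ range (n + 1)) :
      ∑ y : F, (-1) ^ j * n.choose j * y ^ (m + j) =
        if j = Fintype.card F - 1 - m then -((-1) ^ j * n.choose j : F) else 0 := by
    rw [mem_range] at hj
    rw [← mul_sum, sum_pow_eq_ite_of_lt (by omega)]
    simp [show m + j = Fintype.card F - 1 ↔ j = Fintype.card F - 1 - m by omega]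
  rw [sum_congr rfl fun y _ => expand y, sum_comm, sum_congr rfl fun j hj => power_sum hj,
    sum_ite_eq']
  split_ifs with h
  · rfl
  · rw [Nat.choose_eq_zero_of_lt (by rw [mem_range] at h; omega), Nat.cast_zero, mul_zero, neg_zero]

omit [Fintype F] in
theorem exists_mulChar_forall_eq_pow {k : ℕ} (hk : k ≠ 0) :
    ∃ χ : MulChar F F, ∀ y, χ y = y ^ k := by
  refine ⟨MulChar.ofUnitHom (MonoidHom.id Fˣ) ^ k, fun y => ?_⟩
  rw [MulChar.pow_apply' _ hk]
  rcases eq_or_ne y 0 with rfl | hy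
  · rw [MulChar.map_zero]
  · exact congrArg (· ^ k) (MulChar.ofUnitHom_coe (MonoidHom.id Fˣ) (Units.mk0 y hy))

end PowerSums

section OcticCharacters

section Sums

variable {K : Type*} [CommRing K] {N : ZMod 8 → K} (hN : ∀ i, N (3 * i) = N i) {ζ : K}
include hN

theorem sum_pow_val_mul_zmod_eight :
    ∑ i : ZMod 8, ζ ^ i.val * N i =
      N 0 + ζ ^ 4 * N 4 + (ζ + ζ ^ 3) * N 1 + (ζ ^ 5 + ζ ^ 7) * N 5 + (ζ ^ 2 + ζ ^ 6) * N 2 := by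
  have h1 : N 3 = N 1 := hN 1
  have h2 : N 6 = N 2 := hN 2
  have h5 : N 7 = N 5 := hN 5
  change ∑ i : Fin 8, ζ ^ (i : ℕ) * N i = _
  rw [Fin.sum_univ_eight]
  change ζ ^ 0 * N 0 + ζ ^ 1 * N 1 + ζ ^ 2 * N 2 + ζ ^ 3 * N 3 + ζ ^ 4 * N 4 + ζ ^ 5 * N 5 +
    ζ ^ 6 * N 6 + ζ ^ 7 * N 7 = _
  rw [h1, h2, h5]
  ring

theorem sum_zmod_eight : ∑ i, N i = N 0 + N 4 + 2 * N 1 + 2 * N 5 + 2 * N 2 := by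
  have h := sum_pow_val_mul_zmod_eight hN (ζ := 1)
  simp only [one_pow, one_mul] at h
  rw [h]
  ring

theorem sum_pow_val_mul_of_pow_four_eq_neg_one (hζ : ζ ^ 4 = -1) :
    ∑ i : ZMod 8, ζ ^ i.val * N i = N 0 - N 4 + (ζ + ζ ^ 3) * (N 1 - N 5) := by
  rw [sum_pow_val_mul_zmod_eight hN]
  linear_combination (N 4 + (ζ + ζ ^ 3) * N 5 + ζ ^ 2 * N 2) * hζ

theorem sum_pow_val_mul_of_sq_eq_neg_one (hζ : ζ ^ 2 = -1) :
    ∑ i : ZMod 8, ζ ^ i.val * N i = N 0 + N 4 - 2 * N 2 := by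
  rw [sum_pow_val_mul_zmod_eight hN]
  linear_combination ((ζ ^ 2 - 1) * N 4 + ζ * N 1 + ζ ^ 5 * N 5 +
    (ζ ^ 4 - ζ ^ 2 + 2) * N 2) * hζ

theorem sum_neg_one_pow_val_mul :
    ∑ i : ZMod 8, (-1) ^ i.val * N i = N 0 + N 4 + 2 * N 2 - 2 * N 1 - 2 * N 5 := by
  rw [sum_pow_val_mul_zmod_eight hN]
  ring

end Sums

theorem add_pow_three_sq_of_pow_four_eq_neg_one {K : Type*} [CommRing K] {ζ : K}
    (hζ : ζ ^ 4 = -1) : (ζ + ζ ^ 3) ^ 2 = -2 := by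
  linear_combination (ζ ^ 2 + 2) * hζ

theorem inv_add_inv_pow_three_of_pow_four_eq_neg_one {K : Type*} [Field K] {ζ : K}
    (hζ : ζ ^ 4 = -1) : ζ⁻¹ + ζ⁻¹ ^ 3 = -(ζ + ζ ^ 3) := by
  have hinv : ζ⁻¹ = -ζ ^ 3 := inv_eq_of_mul_eq_one_left (by linear_combination -hζ)
  rw [hinv]
  linear_combination (ζ - ζ ^ 5) * hζ

variable {F : Type*} [Field F] [Fintype F] [DecidableEq F]

/-- The rational part of the Jacobi sum `J(χ, χ)` of a character `χ` of order `8`. -/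
def octicJacobiRat (α : F) : ℤ :=
  mulOneSubCount α (0 : ZMod 8) - mulOneSubCount α (4 : ZMod 8)

/-- The coefficient of `χ(α) + χ(α)³ = ±√-2` in the Jacobi sum `J(χ, χ)` of a character `χ` of
order `8`. -/
def octicJacobiIrr (α : F) : ℤ :=
  mulOneSubCount α (1 : ZMod 8) - mulOneSubCount α (5 : ZMod 8)

omit [DecidableEq F] in
theorem jacobiSum_ne_zero_of_forall_eq_pow {p J n : ℕ} [Fact p.Prime] [CharP F p] (hp8 : p % 8 = 3)
    (hJ : Fintype.card F = 8 * J + 1) (hF : Fintype.card F = p ^ (2 * n)) {χ : MulChar F F}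
    (hχ : ∀ y, χ y = y ^ (7 * J)) : jacobiSum χ χ ≠ 0 := by
  have hJ0 : 1 < 8 * J + 1 := hJ ▸ Fintype.one_lt_card
  simp only [jacobiSum, hχ]
  rw [sum_pow_mul_one_sub_pow (by omega) (by omega), show Fintype.card F - 1 - 7 * J = J by omega]
  refine neg_ne_zero.mpr (mul_ne_zero (pow_ne_zero _ (neg_ne_zero.mpr one_ne_zero)) fun h => ?_)
  exact not_dvd_choose_seven_mul (Fact.out : p.Prime) hp8 (hJ.symm.trans hF)
    ((CharP.cast_eq_zero_iff F p _).mp h)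

variable {α : F} (hα : IsPrimitiveRoot α (Fintype.card F - 1)) (he : 8 ∣ Fintype.card F - 1)
include hα he

omit [DecidableEq F] in
theorem exists_mulChar_apply_pow_four_eq_neg_one : ∃ χ : MulChar F ℂ, χ α ^ 4 = -1 := by
  obtain ⟨ζ, hζ⟩ : ∃ ζ : ℂ, ζ ^ 4 = -1 := IsAlgClosed.exists_pow_nat_eq (-1) (by norm_num)
  obtain ⟨k, hk⟩ := he
  obtain ⟨χ, rfl⟩ := exists_mulChar_apply_eq hα (K := ℂ) (ζ := ζ) <| by
    rw [hk, show 8 * k = 4 * (2 * k) by ring, pow_mul, hζ, pow_mul, neg_one_sq, one_pow]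
  exact ⟨χ, hζ⟩

variable {p : ℕ} [Fact p.Prime] [CharP F p] (hp8 : p % 8 = 3)
include hp8

theorem mulOneSubCount_three_mul (i : ZMod 8) :
    mulOneSubCount α (3 * i) = mulOneSubCount α i := by
  have hp : (p : ZMod 8) = 3 := (ZMod.natCast_eq_natCast_iff' p 3 8).mpr hp8
  simpa [hp] using mulOneSubCount_char_mul hα he (p := p) (hp ▸ by decide) i

theorem jacobiSum_self_eq_octicJacobi {K : Type*} [CommRing K] {χ : MulChar F K}
    (hχ : χ α ^ 4 = -1) :
    jacobiSum χ χ = octicJacobiRat α + (χ α + χ α ^ 3) * octicJacobiIrr α := by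
  rw [jacobiSum_self_eq_sum_mulOneSubCount hα he (by linear_combination (χ α ^ 4 - 1) * hχ),
    sum_pow_val_mul_of_pow_four_eq_neg_one
      (fun i => congrArg Nat.cast (mulOneSubCount_three_mul hα he hp8 i)) hχ]
  simp [octicJacobiRat, octicJacobiIrr]

/-- The involution `y ↦ 1 - y` has the single fixed point `1 / 2`, which lies in the prime field
and is therefore a power `α ^ n` with `8 ∣ 2 * n`. -/
theorem even_mulOneSubCount {i : ZMod 8} (hi : i ≠ 0) : Even (mulOneSubCount α i) := by
  have fixed_mem {y : F} (hy : 1 - y = y) : y * (1 - y) ∈ cycClass α 8 (0 : ZMod 8).val := by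
    have h2 : 2 * y = 1 := by linear_combination -hy
    have hy0 : y ≠ 0 := right_ne_zero_of_mul_eq_one h2
    have hyp : y ^ p = y := by
      have h := congrArg (frobenius F p) h2
      rw [map_mul, map_ofNat, map_one, ← h2] at h
      exact mul_left_cancel₀ (left_ne_zero_of_mul_eq_one h2) h
    obtain ⟨n, rfl⟩ := exists_pow_eq_of_ne_zero hα hy0
    have hn : ((n * p : ℕ) : ZMod 8) = n := by
      rw [← pow_mem_cycClass_val hα he, pow_mul, hyp, pow_mem_cycClass_val hα he]
    rw [Nat.cast_mul, (ZMod.natCast_eq_natCast_iff' p 3 8).mpr hp8] at hn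
    rw [hy, ← pow_add, pow_mem_cycClass_val hα he, Nat.cast_add]
    push_cast at hn
    linear_combination hn
  rw [← ZMod.natCast_eq_zero_iff_even, mulOneSubCount, cast_card]
  refine sum_involution (fun y _ => 1 - y) (fun _ _ => by decide) (fun y hy _ hfix => hi ?_)
    (fun y hy => ?_) fun y _ => sub_sub_cancel 1 y
  · rw [mem_filter_univ] at hy
    have hmem := fixed_mem hfix
    obtain ⟨n, hn⟩ := exists_pow_eq_of_ne_zero hα
      (ne_of_mem_of_not_mem hmem (zero_notMem_cycClass hα _))
    rw [← hn, pow_mem_cycClass_val hα he] at hy hmem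
    rw [← hy, hmem]
  · rw [mem_filter_univ] at hy ⊢
    rwa [sub_sub_cancel, mul_comm]

theorem octicJacobiRat_emod_four : octicJacobiRat α % 4 = 3 := by
  have hsum := sum_mulOneSubCount hα he
  rw [sum_zmod_eight fun i => congrArg Nat.cast (mulOneSubCount_three_mul hα he hp8 i)] at hsum
  have h1 := even_mulOneSubCount hα he hp8 (i := 1) (by decide)
  have h2 := even_mulOneSubCount hα he hp8 (i := 2) (by decide)
  have h4 := even_mulOneSubCount hα he hp8 (i := 4) (by decide)
  have h5 := even_mulOneSubCount hα he hp8 (i := 5) (by decide)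
  rw [octicJacobiRat]
  grind

theorem octicJacobiRat_sq_add :
    octicJacobiRat α ^ 2 + 2 * octicJacobiIrr α ^ 2 = Fintype.card F := by
  obtain ⟨χ, hχ⟩ := exists_mulChar_apply_pow_four_eq_neg_one hα he
  have hinv : χ⁻¹ α = (χ α)⁻¹ := MulChar.inv_apply_eq_inv' χ α
  have hF : ringChar ℂ ≠ ringChar F := by
    rw [ringChar.eq_zero, ringChar.eq F p]
    exact (Fact.out : p.Prime).ne_zero.symm
  have h := jacobiSum_mul_jacobiSum_inv hF (χ := χ) (φ := χ)
    (mulChar_ne_one_of_apply_ne_one hα fun h => by norm_num [h] at hχ)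
    (mulChar_ne_one_of_apply_ne_one hα fun h => by norm_num [h] at hχ)
    (mulChar_ne_one_of_apply_ne_one hα fun h => by
      rw [MulChar.mul_apply] at h
      norm_num [show χ α ^ 4 = (χ α * χ α) ^ 2 by ring, h] at hχ)
  rw [jacobiSum_self_eq_octicJacobi hα he hp8 hχ, jacobiSum_self_eq_octicJacobi hα he hp8
    (by rw [hinv, inv_pow, hχ, inv_neg_one]), hinv,
    inv_add_inv_pow_three_of_pow_four_eq_neg_one hχ] at h
  have : (octicJacobiRat α ^ 2 + 2 * octicJacobiIrr α ^ 2 : ℂ) = Fintype.card F := by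
    rw [← h]
    linear_combination octicJacobiIrr α ^ 2 * add_pow_three_sq_of_pow_four_eq_neg_one hχ
  exact_mod_cast this

/-- Modulo `p` the Jacobi sum becomes a power sum, equal up to sign to the binomial coefficient
`(7 * J).choose J` with `8 * J + 1 = #F`. -/
theorem not_dvd_octicJacobiRat {n : ℕ} (hF : Fintype.card F = p ^ (2 * n)) :
    ¬(p : ℤ) ∣ octicJacobiRat α := by
  intro hdvd
  have hrat : (octicJacobiRat α : F) = 0 := (CharP.intCast_eq_zero_iff F p _).mpr hdvd
  have hirr : (octicJacobiIrr α : F) = 0 := by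
    have h := congrArg (Int.cast : ℤ → F) (octicJacobiRat_sq_add hα he hp8)
    push_cast at h
    rw [hrat, FiniteField.cast_card_eq_zero] at h
    have h2 : (2 : F) ≠ 0 := fun h2 => by
      have := Nat.le_of_dvd two_pos ((CharP.cast_eq_zero_iff F p 2).mp (mod_cast h2))
      omega
    simpa [h2] using h
  obtain ⟨J, hJ⟩ := he
  have hcard : Fintype.card F = 8 * J + 1 := by have := Fintype.card_pos (α := F); omega
  have hJ0 : J ≠ 0 := by
    rintro rfl
    exact Nat.sub_ne_zero_of_lt Fintype.one_lt_card hJ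
  obtain ⟨χ, hχ⟩ := exists_mulChar_forall_eq_pow (F := F) (k := 7 * J) (by omega)
  have hχα : χ α ^ 4 = -1 := by
    have hneg : α ^ (4 * J) = -1 :=
      pow_eq_neg_one_of_isPrimitiveRoot hα (by omega) (by omega)
    rw [hχ, ← pow_mul, show 7 * J * 4 = 4 * J * 7 by ring, pow_mul, hneg,
      Odd.neg_one_pow (by decide)]
  refine jacobiSum_ne_zero_of_forall_eq_pow hp8 hcard hF hχ ?_
  rw [jacobiSum_self_eq_octicJacobi hα ⟨J, hJ⟩ hp8 hχα, hrat, hirr, mul_zero, add_zero]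

theorem octicJacobiRat_eq_neg {n : ℕ} (hF : Fintype.card F = p ^ (2 * n)) {a b : ℤ}
    (hab : a ^ 2 + 2 * b ^ 2 = Fintype.card F) (ha4 : a % 4 = 1) (hpa : ¬(p : ℤ) ∣ a) :
    octicJacobiRat α = -a := by
  have hsq := octicJacobiRat_sq_add hα he hp8
  have hF' : (Fintype.card F : ℤ) = (p : ℤ) ^ (2 * n) := mod_cast hF
  have hn : 2 * n ≠ 0 := fun h => Fintype.one_lt_card.ne' (by rw [hF, h, pow_zero])
  have h2 : ¬(p : ℤ) ∣ 2 := fun h => by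
    have := Int.le_of_dvd two_pos h
    omega
  have h := sq_eq_sq_of_sq_add_mul_sq_eq_prime_pow (Nat.prime_iff_prime_int.mp Fact.out) h2 hn
    le_rfl (hsq.trans hF') (hab.trans hF') (not_dvd_octicJacobiRat hα he hp8 hF) hpa
  have hmod := octicJacobiRat_emod_four hα he hp8
  rcases sq_eq_sq_iff_eq_or_eq_neg.mp h with h | h <;> omega

end OcticCharacters

section OcticPeriods

theorem gaussSum_mul_gaussSum_inv {R K : Type*} [Field R] [Fintype R] [CommRing K] [IsDomain K]
    {χ : MulChar R K} (hχ : χ ≠ 1) {ψ : AddChar R K} (hψ : ψ.IsPrimitive) :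
    gaussSum χ ψ * gaussSum χ⁻¹ ψ = χ (-1) * Fintype.card R := by
  have hneg : χ⁻¹ (-1) = χ (-1) := by rw [MulChar.inv_apply', inv_neg_one]
  rw [← gaussSum_mul_gaussSum_eq_card hχ hψ, ← mul_gaussSum_inv_eq_gaussSum χ⁻¹, hneg]
  ring

variable {F : Type*} [Field F] [Fintype F] [DecidableEq F]

theorem isIntegral_gaussPeriod {K : Type*} [CommRing K] (α : F) (ψ : AddChar F K) {e : ℕ}
    (i : ZMod e) : IsIntegral ℤ (gaussPeriod α ψ i) :=
  IsIntegral.sum _ fun y _ => isIntegral_addChar_apply ψ y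

variable {α : F} (hα : IsPrimitiveRoot α (Fintype.card F - 1)) (hF : Fintype.card F % 16 = 9)
include hα hF

omit [DecidableEq F] in
theorem mulChar_neg_one_eq {K : Type*} [CommRing K] {χ : MulChar F K} (hχ : χ α ^ 8 = 1) :
    χ (-1) = χ α ^ 4 := by
  have hcard : Fintype.card F - 1 = 2 * (4 + 8 * (Fintype.card F / 16)) := by omega
  rw [← pow_eq_neg_one_of_isPrimitiveRoot hα (by omega) hcard, map_pow, pow_add, pow_mul, hχ,
    one_pow, mul_one]

theorem neg_one_mem_cycClass : -1 ∈ cycClass α 8 (4 : ZMod 8).val := by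
  have hcard : Fintype.card F - 1 = 2 * (4 + 8 * (Fintype.card F / 16)) := by omega
  rw [← pow_eq_neg_one_of_isPrimitiveRoot hα (by omega) hcard,
    pow_mem_cycClass_val hα (by omega)]
  push_cast
  reduce_mod_char

variable {p : ℕ} [Fact p.Prime] [CharP F p] (hp8 : p % 8 = 3) {K : Type*}

section CommRing

variable [CommRing K] {ψ : AddChar F K} (hψp : ∀ y, ψ (y ^ p) = ψ y)
include hp8 hψp

theorem gaussPeriod_three_mul (i : ZMod 8) : gaussPeriod α ψ (3 * i) = gaussPeriod α ψ i := by
  have hp : (p : ZMod 8) = 3 := (ZMod.natCast_eq_natCast_iff' p 3 8).mpr hp8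
  simpa [hp] using gaussPeriod_char_mul hα (by omega) hψp (hp ▸ by decide) i

theorem gaussSum_of_pow_four_eq_neg_one {χ : MulChar F K} (hχ : χ α ^ 4 = -1) :
    gaussSum χ ψ = gaussPeriod α ψ (0 : ZMod 8) - gaussPeriod α ψ (4 : ZMod 8) +
      (χ α + χ α ^ 3) * (gaussPeriod α ψ (1 : ZMod 8) - gaussPeriod α ψ (5 : ZMod 8)) := by
  rw [gaussSum_eq_sum_gaussPeriod hα (e := 8) (by omega)
      (by linear_combination (χ α ^ 4 - 1) * hχ),
    sum_pow_val_mul_of_pow_four_eq_neg_one (gaussPeriod_three_mul hα hF hp8 hψp) hχ]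

theorem gaussSum_of_sq_eq_neg_one {χ : MulChar F K} (hχ : χ α ^ 2 = -1) :
    gaussSum χ ψ = gaussPeriod α ψ (0 : ZMod 8) + gaussPeriod α ψ (4 : ZMod 8) -
      2 * gaussPeriod α ψ (2 : ZMod 8) := by
  rw [gaussSum_eq_sum_gaussPeriod hα (e := 8) (by omega)
      (by linear_combination (χ α ^ 6 - χ α ^ 4 + χ α ^ 2 - 1) * hχ),
    sum_pow_val_mul_of_sq_eq_neg_one (gaussPeriod_three_mul hα hF hp8 hψp) hχ]

theorem gaussSum_of_eq_neg_one {χ : MulChar F K} (hχ : χ α = -1) :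
    gaussSum χ ψ = gaussPeriod α ψ (0 : ZMod 8) + gaussPeriod α ψ (4 : ZMod 8) +
      2 * gaussPeriod α ψ (2 : ZMod 8) - 2 * gaussPeriod α ψ (1 : ZMod 8) -
      2 * gaussPeriod α ψ (5 : ZMod 8) := by
  rw [gaussSum_eq_sum_gaussPeriod hα (e := 8) (by omega) (by norm_num [hχ]), hχ,
    sum_neg_one_pow_val_mul (gaussPeriod_three_mul hα hF hp8 hψp)]

end CommRing

variable {ψ : AddChar F ℂ} (hψ : ψ.IsPrimitive) (hψp : ∀ y, ψ (y ^ p) = ψ y)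
include hp8 hψ hψp

theorem quadratic_gaussPeriod_sq :
    (gaussPeriod α ψ (0 : ZMod 8) + gaussPeriod α ψ (4 : ZMod 8) +
      2 * gaussPeriod α ψ (2 : ZMod 8) - 2 * gaussPeriod α ψ (1 : ZMod 8) -
      2 * gaussPeriod α ψ (5 : ZMod 8)) ^ 2 = Fintype.card F := by
  obtain ⟨χ, hχ⟩ := exists_mulChar_apply_eq hα (K := ℂ) (ζ := -1)
    (Even.neg_one_pow (Nat.even_iff.mpr (by omega)))
  have h := gaussSum_mul_gaussSum_inv
    (mulChar_ne_one_of_apply_ne_one hα (χ := χ) (by norm_num [hχ])) hψ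
  rw [mulChar_neg_one_eq hα hF (by norm_num [hχ]), gaussSum_of_eq_neg_one hα hF hp8 hψp hχ,
    gaussSum_of_eq_neg_one hα hF hp8 hψp (by rw [MulChar.inv_apply_eq_inv', hχ, inv_neg_one]),
    hχ] at h
  linear_combination h

theorem quartic_gaussPeriod_sq :
    (gaussPeriod α ψ (0 : ZMod 8) + gaussPeriod α ψ (4 : ZMod 8) -
      2 * gaussPeriod α ψ (2 : ZMod 8)) ^ 2 = Fintype.card F := by
  obtain ⟨χ, hχ⟩ := exists_mulChar_apply_eq hα (K := ℂ) (ζ := Complex.I) <| by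
    rw [show Fintype.card F - 1 = 4 * (2 + 4 * (Fintype.card F / 16)) by omega, pow_mul,
      Complex.I_pow_four, one_pow]
  have h := gaussSum_mul_gaussSum_inv
    (mulChar_ne_one_of_apply_ne_one hα (χ := χ) (by simp [hχ, Complex.ext_iff])) hψ
  have hsq : χ α ^ 2 = -1 := by rw [hχ, Complex.I_sq]
  have hsqinv : χ⁻¹ α ^ 2 = -1 := by
    rw [MulChar.inv_apply_eq_inv', inv_pow, hsq, inv_neg_one]
  rw [mulChar_neg_one_eq hα hF (by linear_combination (χ α ^ 6 - χ α ^ 4 + χ α ^ 2 - 1) * hsq),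
    gaussSum_of_sq_eq_neg_one hα hF hp8 hψp hsq,
    gaussSum_of_sq_eq_neg_one hα hF hp8 hψp hsqinv] at h
  linear_combination h + (χ α ^ 2 - 1) * Fintype.card F * hsq

theorem octic_gaussPeriod_sq_add :
    (gaussPeriod α ψ (0 : ZMod 8) - gaussPeriod α ψ (4 : ZMod 8)) ^ 2 +
      2 * (gaussPeriod α ψ (1 : ZMod 8) - gaussPeriod α ψ (5 : ZMod 8)) ^ 2 =
        -Fintype.card F := by
  obtain ⟨χ, hχ⟩ := exists_mulChar_apply_pow_four_eq_neg_one hα (by omega)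
  have hinv : χ⁻¹ α = (χ α)⁻¹ := MulChar.inv_apply_eq_inv' χ α
  have hχinv : χ⁻¹ α ^ 4 = -1 := by rw [hinv, inv_pow, hχ, inv_neg_one]
  have h := gaussSum_mul_gaussSum_inv
    (mulChar_ne_one_of_apply_ne_one hα (χ := χ) fun h => by norm_num [h] at hχ) hψ
  rw [mulChar_neg_one_eq hα hF (by linear_combination (χ α ^ 4 - 1) * hχ),
    gaussSum_of_pow_four_eq_neg_one hα hF hp8 hψp hχ,
    gaussSum_of_pow_four_eq_neg_one hα hF hp8 hψp hχinv, hinv,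
    inv_add_inv_pow_three_of_pow_four_eq_neg_one hχ, hχ] at h
  linear_combination h + (gaussPeriod α ψ (1 : ZMod 8) - gaussPeriod α ψ (5 : ZMod 8)) ^ 2 *
    add_pow_three_sq_of_pow_four_eq_neg_one hχ

omit hψ in
theorem octic_gaussPeriod_sq_sub :
    (gaussPeriod α ψ (0 : ZMod 8) - gaussPeriod α ψ (4 : ZMod 8)) ^ 2 -
      2 * (gaussPeriod α ψ (1 : ZMod 8) - gaussPeriod α ψ (5 : ZMod 8)) ^ 2 =
        (gaussPeriod α ψ (0 : ZMod 8) + gaussPeriod α ψ (4 : ZMod 8) -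
          2 * gaussPeriod α ψ (2 : ZMod 8)) * octicJacobiRat α := by
  have key {χ : MulChar F ℂ} (hχ : χ α ^ 4 = -1) := by
    have hsq : (χ * χ) α ^ 2 = -1 := by
      rw [MulChar.mul_apply]
      linear_combination hχ
    have h := jacobiSum_mul_nontrivial (χ := χ) (φ := χ)
      (mulChar_ne_one_of_apply_ne_one hα fun h => by norm_num [h] at hsq) ψ
    rwa [gaussSum_of_sq_eq_neg_one hα hF hp8 hψp hsq,
      gaussSum_of_pow_four_eq_neg_one hα hF hp8 hψp hχ,
      jacobiSum_self_eq_octicJacobi hα (by omega) hp8 hχ] at h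
  obtain ⟨χ, hχ⟩ := exists_mulChar_apply_pow_four_eq_neg_one hα (by omega)
  have hinv : χ⁻¹ α = (χ α)⁻¹ := MulChar.inv_apply_eq_inv' χ α
  have hχinv : χ⁻¹ α ^ 4 = -1 := by rw [hinv, inv_pow, hχ, inv_neg_one]
  have h := key hχ
  have hc := key hχinv
  rw [hinv, inv_add_inv_pow_three_of_pow_four_eq_neg_one hχ] at hc
  linear_combination -h / 2 - hc / 2 -
    (gaussPeriod α ψ (1 : ZMod 8) - gaussPeriod α ψ (5 : ZMod 8)) ^ 2 *
      add_pow_three_sq_of_pow_four_eq_neg_one hχ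

theorem sum_gaussPeriod_octic :
    gaussPeriod α ψ (0 : ZMod 8) + gaussPeriod α ψ (4 : ZMod 8) +
      2 * gaussPeriod α ψ (1 : ZMod 8) + 2 * gaussPeriod α ψ (5 : ZMod 8) +
      2 * gaussPeriod α ψ (2 : ZMod 8) = -1 := by
  rw [← sum_zmod_eight (gaussPeriod_three_mul hα hF hp8 hψp),
    sum_gaussPeriod hα (by omega) (AddChar.mulShift_one ψ ▸ hψ one_ne_zero)]

variable {X : ℤ} (hX : X ^ 2 = Fintype.card F) (hX8 : X % 8 = 3)
include hX hX8

theorem quadratic_gaussPeriod_eq :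
    gaussPeriod α ψ (0 : ZMod 8) + gaussPeriod α ψ (4 : ZMod 8) +
      2 * gaussPeriod α ψ (2 : ZMod 8) - 2 * gaussPeriod α ψ (1 : ZMod 8) -
      2 * gaussPeriod α ψ (5 : ZMod 8) = X := by
  have hXF : (X : ℂ) ^ 2 = Fintype.card F := mod_cast hX
  refine (sq_eq_sq_iff_eq_or_eq_neg.mp
    ((quadratic_gaussPeriod_sq hα hF hp8 hψ hψp).trans hXF.symm)).resolve_right fun h => ?_
  have hsum := sum_gaussPeriod_octic hα hF hp8 hψ hψp
  have hdvd : 4 ∣ X - 1 := intCast_dvd_of_mul_eq_of_isIntegral (K := ℂ)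
    ((isIntegral_gaussPeriod α ψ (1 : ZMod 8)).add (isIntegral_gaussPeriod α ψ (5 : ZMod 8)))
    four_ne_zero (by push_cast; linear_combination hsum - h)
  omega

theorem quartic_gaussPeriod_eq :
    gaussPeriod α ψ (0 : ZMod 8) + gaussPeriod α ψ (4 : ZMod 8) -
      2 * gaussPeriod α ψ (2 : ZMod 8) = -X := by
  have hXF : (X : ℂ) ^ 2 = Fintype.card F := mod_cast hX
  refine (sq_eq_sq_iff_eq_or_eq_neg.mp
    ((quartic_gaussPeriod_sq hα hF hp8 hψ hψp).trans hXF.symm)).resolve_left fun h => ?_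
  have hsum := sum_gaussPeriod_octic hα hF hp8 hψ hψp
  have hquad := quadratic_gaussPeriod_eq hα hF hp8 hψ hψp hX hX8
  have hdvd : 8 ∣ -X - 1 := intCast_dvd_of_mul_eq_of_isIntegral (K := ℂ)
    (isIntegral_gaussPeriod α ψ (2 : ZMod 8)) (by norm_num)
    (by push_cast; linear_combination hsum + hquad - 2 * h)
  omega

end OcticPeriods

section OcticPeriodRelations

/-- The relations satisfied by the octic Gaussian periods `η i` of a field of `X ^ 2` elements with
characteristic congruent to `3` modulo `8`, when the octic Jacobi sum has rational part `2 - X`.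
They determine the `η i` up to two signs. -/
structure OcticPeriodRelations {K : Type*} [Field K] (X : K) (η : ZMod 8 → K) : Prop where
  three_mul (i : ZMod 8) : η (3 * i) = η i
  two : η 2 = (3 * X - 1) / 8
  four : η 4 = -(X + 1) / 4 - η 0
  five : η 5 = -(X + 1) / 4 - η 1
  zero_sub_four_sq : (η 0 - η 4) ^ 2 = -X
  one_sub_five_sq : 2 * (η 1 - η 5) ^ 2 = X - X ^ 2

theorem forall_zmod_eight {P : ZMod 8 → Prop} :
    (∀ i, P i) ↔ P 0 ∧ P 1 ∧ P 2 ∧ P 3 ∧ P 4 ∧ P 5 ∧ P 6 ∧ P 7 :=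
  ⟨fun h => ⟨h 0, h 1, h 2, h 3, h 4, h 5, h 6, h 7⟩, fun ⟨h0, h1, h2, h3, h4, h5, h6, h7⟩ i => by
    change Fin 8 at i
    fin_cases i <;> assumption⟩

theorem sum_even_zmod_eight {M : Type*} [AddCommMonoid M] (f : ZMod 8 → M) :
    ∑ l ∈ ({0, 2, 4, 6} : Finset (ZMod 8)), f l = f 0 + (f 2 + (f 4 + f 6)) := by
  rw [sum_insert (by decide), sum_insert (by decide), sum_pair (by decide)]

namespace OcticPeriodRelations

variable {K : Type*} [Field K] {X : K} {η : ZMod 8 → K} (hη : OcticPeriodRelations X η)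
include hη

theorem three : η 3 = η 1 :=
  hη.three_mul 1

theorem six : η 6 = η 2 :=
  hη.three_mul 2

theorem seven : η 7 = η 5 :=
  hη.three_mul 5

variable [CharZero K] {k lam mu : K} (hk : k = (X ^ 2 - 1) / 4)
  (hlam : lam = (X ^ 2 - 7 + 2 * X) / 8) (hmu : mu = (X ^ 2 - 3 - 2 * X) / 8)
include hk hlam hmu

theorem sum_three_five_two_six (j : ZMod 8) :
    ∑ i, ((∑ l ∈ (![{3, 5}, {2, 6}] : Fin 2 → Finset (ZMod 8)) i, η (l + j)) *
      (∑ l ∈ (![{3, 5}, {2, 6}] : Fin 2 → Finset (ZMod 8)) i, η (l + (j + 4))) - k) =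
    lam * ∑ l ∈ ({0, 2, 4, 6} : Finset (ZMod 8)), η (l + j) +
      mu * (-1 - ∑ l ∈ ({0, 2, 4, 6} : Finset (ZMod 8)), η (l + j)) := by
  have h0 := hη.four ▸ hη.zero_sub_four_sq
  have h1 := hη.five ▸ hη.one_sub_five_sq
  simp only [Fin.sum_univ_two, Matrix.cons_val_zero, Matrix.cons_val_one, sum_even_zmod_eight,
    sum_pair (show (3 : ZMod 8) ≠ 5 by decide), sum_pair (show (2 : ZMod 8) ≠ 6 by decide)]
  revert j
  rw [forall_zmod_eight]
  reduce_mod_char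
  simp only [hη.three, hη.six, hη.seven, hη.two, hη.four, hη.five, hk, hlam, hmu]
  refine ⟨?_, ?_, ?_, ?_, ?_, ?_, ?_, ?_⟩
  case refine_1 | refine_5 => ring
  case refine_3 | refine_7 => linear_combination -h1 / 2
  all_goals linear_combination -h0 / 4

theorem sum_zero_two_three_seven (j : ZMod 8) :
    ∑ i, ((∑ l ∈ (![{0, 2}, {3, 7}] : Fin 2 → Finset (ZMod 8)) i, η (l + j)) *
      (∑ l ∈ (![{0, 2}, {3, 7}] : Fin 2 → Finset (ZMod 8)) i, η (l + (j + 4))) - k) =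
    mu * ∑ l ∈ ({0, 2, 4, 6} : Finset (ZMod 8)), η (l + j) +
      lam * (-1 - ∑ l ∈ ({0, 2, 4, 6} : Finset (ZMod 8)), η (l + j)) := by
  have h0 := hη.four ▸ hη.zero_sub_four_sq
  have h1 := hη.five ▸ hη.one_sub_five_sq
  simp only [Fin.sum_univ_two, Matrix.cons_val_zero, Matrix.cons_val_one, sum_even_zmod_eight,
    sum_pair (show (0 : ZMod 8) ≠ 2 by decide), sum_pair (show (3 : ZMod 8) ≠ 7 by decide)]
  revert j
  rw [forall_zmod_eight]
  reduce_mod_char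
  simp only [hη.three, hη.six, hη.seven, hη.two, hη.four, hη.five, hk, hlam, hmu]
  refine ⟨?_, ?_, ?_, ?_, ?_, ?_, ?_, ?_⟩
  case refine_4 | refine_8 => ring
  case refine_2 | refine_6 => linear_combination -h1 / 2
  all_goals linear_combination -h0 / 4

end OcticPeriodRelations

end OcticPeriodRelations

section OcticFamilies

theorem cycUnion_pairs {F : Type*} [Field F] [Fintype F] [DecidableEq F] (α : F) {e : ℕ}
    (i j k l : ZMod e) :
    (fun n : Fin 2 => cycUnion α (![{i, j}, {k, l}] n : Finset (ZMod e))) =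
      ![cycClass α e i.val ∪ cycClass α e j.val, cycClass α e k.val ∪ cycClass α e l.val] := by
  funext n
  fin_cases n <;> exact cycUnion_pair ..

variable {F : Type*} [Field F] [Fintype F] [DecidableEq F]
  {α : F} (hα : IsPrimitiveRoot α (Fintype.card F - 1)) (hF : Fintype.card F % 16 = 9)
include hα hF

theorem cycClass_two_zero_eq_cycUnion :
    cycClass α 2 0 = cycUnion α ({0, 2, 4, 6} : Finset (ZMod 8)) := by
  ext y
  rcases eq_or_ne y 0 with rfl | hy
  · simp only [zero_notMem_cycClass hα, zero_notMem_cycUnion hα]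
  obtain ⟨n, rfl⟩ := exists_pow_eq_of_ne_zero hα hy
  have heven (i : ZMod 8) : i ∈ ({0, 2, 4, 6} : Finset (ZMod 8)) ↔ 2 ∣ i.val := by
    decide +revert
  rw [pow_mem_cycClass hα (by omega), pow_mem_cycUnion hα (by omega), heven, ZMod.val_natCast,
    Nat.cast_zero, ZMod.natCast_eq_zero_iff]
  omega

variable {p : ℕ} [Fact p.Prime] [CharP F p] (hp8 : p % 8 = 3)
  {X : ℤ} (hX : X ^ 2 = Fintype.card F) (hX8 : X % 8 = 3) (hJ : octicJacobiRat α = 2 - X)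
include hp8 hX hX8 hJ

theorem octicPeriodRelations_gaussPeriod {ψ : AddChar F ℂ} (hψ : ψ.IsPrimitive)
    (hψp : ∀ y, ψ (y ^ p) = ψ y) :
    OcticPeriodRelations (X : ℂ) (gaussPeriod α ψ : ZMod 8 → ℂ) := by
  have hsum := sum_gaussPeriod_octic hα hF hp8 hψ hψp
  have hquad := quadratic_gaussPeriod_eq hα hF hp8 hψ hψp hX hX8
  have hquart := quartic_gaussPeriod_eq hα hF hp8 hψ hψp hX hX8
  have hadd := octic_gaussPeriod_sq_add hα hF hp8 hψ hψp
  have hsub := octic_gaussPeriod_sq_sub hα hF hp8 hψp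
  have hXF : (X : ℂ) ^ 2 = Fintype.card F := mod_cast hX
  rw [← hXF] at hadd
  rw [hquart, hJ] at hsub
  push_cast at hsub
  exact {
    three_mul := gaussPeriod_three_mul hα hF hp8 hψp
    two := by linear_combination (hsum + hquad - 2 * hquart) / 8
    four := by linear_combination (hsum + hquad + 2 * hquart) / 4
    five := by linear_combination (hsum - hquad) / 4
    zero_sub_four_sq := by linear_combination (hadd + hsub) / 2
    one_sub_five_sq := by linear_combination (hadd - hsub) / 2 }

theorem isDPDF_octic_families {lam mu : ℕ} (hlam : 8 * (lam : ℤ) = X ^ 2 - 7 + 2 * X)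
    (hmu : 8 * (mu : ℤ) = X ^ 2 - 3 - 2 * X) :
    IsDPDF ![cycClass α 8 3 ∪ cycClass α 8 5, cycClass α 8 2 ∪ cycClass α 8 6]
        (Fintype.card F) 2 (fun _ => (Fintype.card F - 1) / 4) (cycClass α 2 0) lam mu ∧
      IsDPDF ![cycClass α 8 0 ∪ cycClass α 8 2, cycClass α 8 3 ∪ cycClass α 8 7]
        (Fintype.card F) 2 (fun _ => (Fintype.card F - 1) / 4) (cycClass α 2 0) mu lam := by
  obtain ⟨ψ, hψ, hψp⟩ := exists_isPrimitive_addChar_pow_char_eq F p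
  have hη := octicPeriodRelations_gaussPeriod hα hF hp8 hX hX8 hJ hψ hψp
  have hdvd : 8 ∣ Fintype.card F - 1 := by omega
  have hneg := neg_one_mem_cycClass hα hF
  have hcard : 2 * ((Fintype.card F - 1) / 8) = (Fintype.card F - 1) / 4 := by omega
  have hk : 4 * (((Fintype.card F - 1) / 4 : ℕ) : ℤ) = X ^ 2 - 1 := by omega
  apply_fun ((↑) : ℤ → ℂ) at hk hlam hmu
  push_cast at hk hlam hmu
  rw [mul_comm, ← eq_div_iff (by norm_num)] at hk hlam hmu
  rw [cycClass_two_zero_eq_cycUnion hα hF]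
  constructor
  · have := isDPDF_cycUnion hα hdvd hψ hneg (S := ![{3, 5}, {2, 6}]) (by unfold Pairwise; decide)
      (Fin.forall_fin_two.mpr ⟨hcard, hcard⟩) _ (hη.sum_three_five_two_six hk hlam hmu)
    rwa [cycUnion_pairs] at this
  · have := isDPDF_cycUnion hα hdvd hψ hneg (S := ![{0, 2}, {3, 7}]) (by unfold Pairwise; decide)
      (Fin.forall_fin_two.mpr ⟨hcard, hcard⟩) _ (hη.sum_zero_two_three_seven hk hlam hmu)
    rwa [cycUnion_pairs] at this

end OcticFamilies

section Parameters

theorem pow_mod_eight_eq_three {p n : ℕ} (hp : p % 8 = 3) (hn : Odd n) : p ^ n % 8 = 3 := by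
  obtain ⟨k, rfl⟩ := hn
  rw [pow_succ, pow_mul, Nat.mul_mod, Nat.pow_mod, Nat.pow_mod p, hp]
  norm_num

theorem sq_mod_sixteen_eq_nine {N : ℕ} (hN : N % 8 = 3) : N ^ 2 % 16 = 9 := by
  rw [← Nat.div_add_mod N 8, hN]
  ring_nf
  omega

theorem eq_neg_of_sq_eq_sq_of_emod_four {x y : ℤ} (h : x ^ 2 = y ^ 2) (hx : x % 4 = 1)
    (hy : y % 4 = 3) : x = -y := by
  rcases sq_eq_sq_iff_eq_or_eq_neg.mp h with h | h <;> omega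

theorem exists_octic_parameters {N : ℕ} (hN : N % 8 = 3) :
    ∃ lam mu : ℕ, 8 * (lam : ℤ) = N ^ 2 - 7 + 2 * N ∧ 8 * (mu : ℤ) = N ^ 2 - 3 - 2 * N := by
  obtain ⟨k, rfl⟩ : ∃ k, N = 8 * k + 3 := ⟨N / 8, by omega⟩
  refine ⟨8 * k ^ 2 + 8 * k + 1, 8 * k ^ 2 + 4 * k, ?_, ?_⟩ <;> push_cast <;> ring

theorem not_dvd_pow_sub_two {p n : ℕ} (hp : p % 8 = 3) (hn : n ≠ 0) :
    ¬(p : ℤ) ∣ (p : ℤ) ^ n - 2 := by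
  rw [dvd_sub_right (dvd_pow_self _ hn)]
  intro h
  have := Int.le_of_dvd two_pos h
  omega

end Parameters

/-- Let `q = p^m` with `p ≡ 3 (mod 8)` prime and `m ≡ 2 (mod 4)`; let
`x, a, b` be integers with `x² = q`, `q = a² + 2b²`, `a ≡ 1 (mod 4)` and `x + a = -2`.
Then (i) `{C_3^8 ∪ C_5^8, C_2^8 ∪ C_6^8}` is a
`(q,2,(q-1)/4;(q-7-2x)/8,(q-3+2x)/8)`-DPDF relative to `C_0^2`, and
(ii) `{C_0^8 ∪ C_2^8, C_3^8 ∪ C_7^8}` is a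
`(q,2,(q-1)/4;(q-3+2x)/8,(q-7-2x)/8)`-DPDF relative to `C_0^2`. -/
theorem stmt_9 {F : Type*} [Field F] [Fintype F] [DecidableEq F]
    (q p m : ℕ) (hp : p.Prime) (hp8 : p % 8 = 3) (hm : m % 4 = 2)
    (hq : Fintype.card F = q) (hqpm : q = p ^ m)
    (α : F) (hα : IsPrimitiveElt α)
    (x a b : ℤ) (hx : x ^ 2 = (q : ℤ)) (hab : (q : ℤ) = a ^ 2 + 2 * b ^ 2)
    (ha4 : a % 4 = 1) (hxa : x + a = -2) :
    ∃ lam mu : ℕ,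
      8 * (lam : ℤ) = (q : ℤ) - 7 - 2 * x ∧
      8 * (mu : ℤ) = (q : ℤ) - 3 + 2 * x ∧
      IsDPDF ![cycClass α 8 3 ∪ cycClass α 8 5, cycClass α 8 2 ∪ cycClass α 8 6]
        q 2 (fun _ => (q - 1) / 4) (cycClass α 2 0) lam mu ∧
      IsDPDF ![cycClass α 8 0 ∪ cycClass α 8 2, cycClass α 8 3 ∪ cycClass α 8 7]
        q 2 (fun _ => (q - 1) / 4) (cycClass α 2 0) mu lam := by
  subst q
  have : Fact p.Prime := ⟨hp⟩
  have : CharP F p := charP_of_card_eq_prime_pow hqpm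
  obtain ⟨n, rfl⟩ : ∃ n, m = 2 * n := ⟨m / 2, by omega⟩
  have hX8 : p ^ n % 8 = 3 := pow_mod_eight_eq_three hp8 (Nat.odd_iff.mpr (by omega))
  have hqX : Fintype.card F = (p ^ n) ^ 2 := by rw [hqpm, mul_comm, pow_mul]
  have hqX' : ((p ^ n : ℕ) : ℤ) ^ 2 = Fintype.card F := mod_cast hqX.symm
  have hF : Fintype.card F % 16 = 9 := hqX ▸ sq_mod_sixteen_eq_nine hX8
  have hxX : x = -(p ^ n : ℕ) :=
    eq_neg_of_sq_eq_sq_of_emod_four (hx.trans hqX'.symm) (by omega) (by omega)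
  have haX : a = (p ^ n : ℕ) - 2 := by omega
  have hroot := hα.isPrimitiveRoot (by omega)
  have hJ : octicJacobiRat α = 2 - (p ^ n : ℕ) := by
    rw [octicJacobiRat_eq_neg hroot (by omega) hp8 hqpm hab.symm ha4
      (by push_cast at haX; exact haX ▸ not_dvd_pow_sub_two hp8 (by omega)), haX, neg_sub]
  obtain ⟨lam, mu, hlam, hmu⟩ := exists_octic_parameters hX8
  refine ⟨lam, mu, by omega, by omega, ?_⟩
  exact isDPDF_octic_families hroot hF hp8 hqX' (by omega) hJ hlam hmu
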